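/- Let G be a finite set of atomic constraints over a finite set X of clocks and let G⁺ be the set of diagonal constraints in G. For all sets Z, Z' of valuations: Z ⋢^LU_G Z' if and only if there exists a subset S ⊆ G⁺ such that (Z ∩ ⋀_{φ∈S} φ) ⋠_{LU(G)} (Z' ∩ ⋀_{φ∈S} φ), where Z ∩ ⋀_{φ∈S} φ = {v ∈ Z | v ⊨ φ for all φ ∈ S}. -/

import Mathlib

open scoped NNReal

/-! ## Atomic constraints over a set of clocks -/

/-- Comparison operator `◁ ∈ {<, ≤}`. -/
inductive Ineq : Type where
  | lt : Ineq
  | le : Ineq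
deriving DecidableEq

/-- Interpretation of a comparison operator on reals. -/
def Ineq.holds : Ineq → ℝ → ℝ → Prop
  | .lt, a, b => a < b
  | .le, a, b => a ≤ b

/-- Atomic constraints over clocks `X`:
`upper x o c` is `x ◁ c` (c ∈ ℕ), `lower c o x` is `c ◁ x` (c ∈ ℕ),
`diag x y o d` is `x - y ◁ d` (d ∈ ℤ). -/
inductive Constr (X : Type) : Type where
  | upper : X → Ineq → ℕ → Constr X
  | lower : ℕ → Ineq → X → Constr X
  | diag : X → X → Ineq → ℤ → Constr X
deriving DecidableEq

namespace Constr

/-- Is the constraint a diagonal constraint `x - y ◁ d`? -/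
def isDiag {X : Type} : Constr X → Bool
  | .diag _ _ _ _ => true
  | _ => false

/-- The integer constant of a constraint. -/
def constOf {X : Type} : Constr X → ℤ
  | .upper _ _ c => (c : ℤ)
  | .lower c _ _ => (c : ℤ)
  | .diag _ _ _ d => d

/-- Satisfaction of a constraint by a clock valuation `v : X → ℝ≥0`. -/
def sat {X : Type} (v : X → ℝ≥0) : Constr X → Prop
  | .upper x o c => o.holds (v x : ℝ) (c : ℝ)
  | .lower c o x => o.holds (c : ℝ) (v x : ℝ)
  | .diag x y o d => o.holds ((v x : ℝ) - (v y : ℝ)) (d : ℝ)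

end Constr

/-- Time elapse: `v + δ`. -/
def shift {X : Type} (v : X → ℝ≥0) (δ : ℝ≥0) : X → ℝ≥0 := fun x => v x + δ

/-- The relation `v ⊑_G v'`: for all `φ ∈ G` and all delays `δ ≥ 0`,
`v + δ ⊨ φ` implies `v' + δ ⊨ φ`. -/
def simG {X : Type} (G : Set (Constr X)) (v v' : X → ℝ≥0) : Prop :=
  ∀ φ ∈ G, ∀ δ : ℝ≥0, Constr.sat (shift v δ) φ → Constr.sat (shift v' δ) φ

/-- `Z ⊑_G Z'` on sets of valuations. -/
def simGZ {X : Type} (G : Set (Constr X)) (Z Z' : Set (X → ℝ≥0)) : Prop :=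
  ∀ v ∈ Z, ∃ v' ∈ Z', simG G v v'

open Classical in
/-- `[R]v`: reset the clocks in `R` to `0`. -/
noncomputable def reset {X : Type} (R : Set X) (v : X → ℝ≥0) : X → ℝ≥0 :=
  fun x => if x ∈ R then 0 else v x

/-- Weakest precondition `wp(⊑_φ, R)` of a single constraint over a reset. -/
def wpReset {X : Type} (R : Set X) : Constr X → Set (Constr X)
  | .upper x o c => {ψ | x ∉ R ∧ ψ = .upper x o c}
  | .lower c o x => {ψ | x ∉ R ∧ ψ = .lower c o x}
  | .diag x y o d =>
      {ψ | (x ∉ R ∧ y ∉ R ∧ ψ = .diag x y o d) ∨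
           (x ∉ R ∧ y ∈ R ∧ 0 ≤ d ∧ ψ = .upper x o d.toNat) ∨
           (x ∈ R ∧ y ∉ R ∧ 0 ≤ -d ∧ ψ = .lower (-d).toNat o y)}

/-- Weakest precondition `wp(⊑_G, R)` of a set of constraints over a reset. -/
def wpResetSet {X : Type} (R : Set X) (G : Set (Constr X)) : Set (Constr X) :=
  ⋃ φ ∈ G, wpReset R φ

/-! ## Timed automata -/

/-- A transition: source state, guard (finite conjunction of constraints),
reset set, target state. -/
abbrev TTrans (Q X : Type) : Type := Q × Finset (Constr X) × Set X × Q

def TTrans.src {Q X : Type} (t : TTrans Q X) : Q := t.1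
def TTrans.grd {Q X : Type} (t : TTrans Q X) : Finset (Constr X) := t.2.1
def TTrans.rst {Q X : Type} (t : TTrans Q X) : Set X := t.2.2.1
def TTrans.tgt {Q X : Type} (t : TTrans Q X) : Q := t.2.2.2

/-- A timed automaton. -/
structure TA (Q X : Type) : Type where
  init : Q
  trans : Finset (TTrans Q X)
  acc : Set Q

/-- Action step of a timed automaton along transition `t`. -/
def Step {Q X : Type} (A : TA Q X) (t : TTrans Q X) (c c' : Q × (X → ℝ≥0)) : Prop :=
  t ∈ A.trans ∧ TTrans.src t = c.1 ∧ (∀ φ ∈ TTrans.grd t, Constr.sat c.2 φ) ∧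
    c'.1 = TTrans.tgt t ∧ c'.2 = reset (TTrans.rst t) c.2

/-- `r` is a simulation on the configurations of `A`: a reflexive transitive
relation, relating only configurations with equal states, compatible with
delays and action transitions. -/
def IsSimulation {Q X : Type} (A : TA Q X)
    (r : (Q × (X → ℝ≥0)) → (Q × (X → ℝ≥0)) → Prop) : Prop :=
  Reflexive r ∧ Transitive r ∧
  ∀ q v q' v', r (q, v) (q', v') →
    q = q' ∧
    (∀ δ : ℝ≥0, ∃ δ' : ℝ≥0, r (q, shift v δ) (q, shift v' δ')) ∧
    (∀ t c₁, Step A t (q, v) c₁ →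
      ∃ v₁', Step A t (q, v') (c₁.1, v₁') ∧ r c₁ (c₁.1, v₁'))

/-- The state-based guard equations:
`G(q) = ⋃_{(q,g,R,q₁) ∈ T} ({g} ∪ wp(⊑_{G(q₁)}, R))`. -/
def GuardEq {Q X : Type} (A : TA Q X) (G : Q → Set (Constr X)) : Prop :=
  ∀ q, G q = ⋃ t ∈ A.trans, ⋃ (_ : TTrans.src t = q),
    ((TTrans.grd t : Set (Constr X)) ∪ wpResetSet (TTrans.rst t) (G (TTrans.tgt t)))

/-! ## LU bounds -/

def lowerConstAt {X : Type} [DecidableEq X] (x : X) : Constr X → WithBot ℕ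
  | .lower c _ y => if y = x then (c : WithBot ℕ) else ⊥
  | _ => ⊥

def upperConstAt {X : Type} [DecidableEq X] (x : X) : Constr X → WithBot ℕ
  | .upper y _ c => if y = x then (c : WithBot ℕ) else ⊥
  | _ => ⊥

/-- `L_G(x)`: maximum constant among lower-bound constraints `c ◁ x` in `G`
(`⊥ = -∞` if none). -/
def Lbound {X : Type} [DecidableEq X] (G : Finset (Constr X)) (x : X) : WithBot ℕ :=
  G.sup (lowerConstAt x)

/-- `U_G(x)`: maximum constant among upper-bound constraints `x ◁ c` in `G`
(`⊥ = -∞` if none). -/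
def Ubound {X : Type} [DecidableEq X] (G : Finset (Constr X)) (x : X) : WithBot ℕ :=
  G.sup (upperConstAt x)

/-- The LU simulation `v ≼_LU v'` for bounds functions `L U : X → ℕ ∪ {-∞}`. -/
def luSim {X : Type} (L U : X → WithBot ℕ) (v v' : X → ℝ≥0) : Prop :=
  ∀ x : X,
    (v' x < v x → (L x).map (fun c : ℕ => (c : ℝ)) < ((v' x : ℝ) : WithBot ℝ)) ∧
    (v x < v' x → (U x).map (fun c : ℕ => (c : ℝ)) < ((v x : ℝ) : WithBot ℝ))

/-- The relation `v ⊑^LU_G v'`: `v ≼_{LU(G)} v'` and every diagonal constraint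
of `G` satisfied by `v` is satisfied by `v'`. -/
def luglu {X : Type} [DecidableEq X] (G : Finset (Constr X)) (v v' : X → ℝ≥0) : Prop :=
  luSim (Lbound G) (Ubound G) v v' ∧
    ∀ φ ∈ G, φ.isDiag → Constr.sat v φ → Constr.sat v' φ

/-- Lifting a relation on valuations to sets of valuations. -/
def zoneRel {X : Type} (r : (X → ℝ≥0) → (X → ℝ≥0) → Prop) (Z Z' : Set (X → ℝ≥0)) : Prop :=
  ∀ v ∈ Z, ∃ v' ∈ Z', r v v'

/-! ## Runs of timed automata -/

/-- `stepsFrom A c l`: the alternating delay-action sequence `l` is a valid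
sequence of steps of `A` starting at configuration `c`. -/
def stepsFrom {Q X : Type} (A : TA Q X) :
    (Q × (X → ℝ≥0)) → List (ℝ≥0 × TTrans Q X) → Prop
  | _, [] => True
  | c, (δ, t) :: l =>
      t ∈ A.trans ∧ TTrans.src t = c.1 ∧
      (∀ φ ∈ TTrans.grd t, Constr.sat (shift c.2 δ) φ) ∧
      stepsFrom A (TTrans.tgt t, reset (TTrans.rst t) (shift c.2 δ)) l

/-- Configuration reached after a sequence of delay-action steps. -/
noncomputable def endConfig {Q X : Type} :
    (Q × (X → ℝ≥0)) → List (ℝ≥0 × TTrans Q X) → (Q × (X → ℝ≥0))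
  | c, [] => c
  | c, (δ, t) :: l => endConfig (TTrans.tgt t, reset (TTrans.rst t) (shift c.2 δ)) l

/-- A run of `A`: a valid sequence of delay-action steps from `(q₀, 0̄)`. -/
def TA.Run {Q X : Type} (A : TA Q X) : Type :=
  {l : List (ℝ≥0 × TTrans Q X) // stepsFrom A (A.init, fun _ => 0) l}

/-- A run is accepting if it ends in an accepting state. -/
def TA.Accepting {Q X : Type} (A : TA Q X) (r : A.Run) : Prop :=
  (endConfig (A.init, fun _ => 0) r.val).1 ∈ A.acc

/-- `A` is diagonal-free: no guard contains a diagonal constraint. -/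
def DiagFree {Q X : Type} (A : TA Q X) : Prop :=
  ∀ t ∈ A.trans, ∀ φ ∈ TTrans.grd t, ¬ φ.isDiag

/-- The (finite) set of diagonal constraints occurring in guards of `A`. -/
def diagGuards {Q X : Type} [DecidableEq X] (A : TA Q X) : Finset (Constr X) :=
  A.trans.biUnion fun t => (TTrans.grd t).filter fun φ => φ.isDiag

/-! ## Updateable timed automata -/

/-- Atomic update of a clock: `x := c` or `x := y + d`. -/
inductive AtomicUp (X : Type) : Type where
  | const : ℕ → AtomicUp X
  | add : X → ℤ → AtomicUp X
deriving DecidableEq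

/-- `up(v) : X → ℝ` (may be negative). -/
def applyUpd {X : Type} (up : X → AtomicUp X) (v : X → ℝ≥0) : X → ℝ :=
  fun x => match up x with
    | .const c => (c : ℝ)
    | .add y d => (v y : ℝ) + (d : ℝ)

/-- Weakest precondition `wp(⊑_φ, up)` of a single constraint over an update. -/
def wpUpd {X : Type} [DecidableEq X] (up : X → AtomicUp X) : Constr X → Set (Constr X)
  | .upper x o c =>
      match up x with
      | .const _ => ∅
      | .add y d => if 0 ≤ (c : ℤ) - d then {Constr.upper y o ((c : ℤ) - d).toNat} else ∅
  | .lower c o x =>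
      match up x with
      | .const _ => ∅
      | .add y d => if 0 ≤ (c : ℤ) - d then {Constr.lower ((c : ℤ) - d).toNat o y} else ∅
  | .diag x y o c =>
      match up x, up y with
      | .const _, .const _ => ∅
      | .add y₁ d₁, .const c₂ =>
          if 0 ≤ c + (c₂ : ℤ) - d₁ then {Constr.upper y₁ o (c + (c₂ : ℤ) - d₁).toNat} else ∅
      | .const c₁, .add y₂ d₂ =>
          if 0 ≤ (c₁ : ℤ) - d₂ - c then {Constr.lower ((c₁ : ℤ) - d₂ - c).toNat o y₂} else ∅
      | .add y₁ d₁, .add y₂ d₂ =>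
          if y₁ = y₂ then ∅ else {Constr.diag y₁ y₂ o (c - d₁ + d₂)}

/-- Weakest precondition `wp(⊑_G, up)` of a set of constraints over an update. -/
def wpUpdSet {X : Type} [DecidableEq X] (up : X → AtomicUp X) (G : Set (Constr X)) :
    Set (Constr X) :=
  ⋃ φ ∈ G, wpUpd up φ

/-- The set of constraints `{0 ≤ x | x ∈ X}`. -/
def nonnegConstrs (X : Type) : Set (Constr X) := {φ | ∃ x : X, φ = Constr.lower 0 Ineq.le x}

/-- A transition of an updateable timed automaton: source, guard, update, target. -/
abbrev UTrans (Q X : Type) : Type := Q × Finset (Constr X) × (X → AtomicUp X) × Q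

def UTrans.src {Q X : Type} (t : UTrans Q X) : Q := t.1
def UTrans.grd {Q X : Type} (t : UTrans Q X) : Finset (Constr X) := t.2.1
def UTrans.upd {Q X : Type} (t : UTrans Q X) : X → AtomicUp X := t.2.2.1
def UTrans.tgt {Q X : Type} (t : UTrans Q X) : Q := t.2.2.2

/-- An updateable timed automaton. -/
structure UTA (Q X : Type) : Type where
  init : Q
  trans : Finset (UTrans Q X)
  acc : Set Q

/-- Action step of an updateable timed automaton along transition `t`:
the guard holds, `up(v) ≥ 0`, and the new valuation is `up(v)`. -/
def UStep {Q X : Type} (A : UTA Q X) (t : UTrans Q X) (c c' : Q × (X → ℝ≥0)) : Prop :=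
  t ∈ A.trans ∧ UTrans.src t = c.1 ∧ (∀ φ ∈ UTrans.grd t, Constr.sat c.2 φ) ∧
    c'.1 = UTrans.tgt t ∧ ∀ x, (c'.2 x : ℝ) = applyUpd (UTrans.upd t) c.2 x

/-- `r` is a simulation on configurations of an updateable timed automaton. -/
def IsSimulationU {Q X : Type} (A : UTA Q X)
    (r : (Q × (X → ℝ≥0)) → (Q × (X → ℝ≥0)) → Prop) : Prop :=
  Reflexive r ∧ Transitive r ∧
  ∀ q v q' v', r (q, v) (q', v') →
    q = q' ∧
    (∀ δ : ℝ≥0, ∃ δ' : ℝ≥0, r (q, shift v δ) (q, shift v' δ')) ∧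
    (∀ t c₁, UStep A t (q, v) c₁ →
      ∃ v₁', UStep A t (q, v') (c₁.1, v₁') ∧ r c₁ (c₁.1, v₁'))

/-- State-based guard equations for updateable timed automata. -/
def GuardEqU {Q X : Type} [DecidableEq X] (A : UTA Q X) (G : Q → Set (Constr X)) : Prop :=
  ∀ q, G q = ⋃ t ∈ A.trans, ⋃ (_ : UTrans.src t = q),
    ((UTrans.grd t : Set (Constr X)) ∪ wpUpdSet (UTrans.upd t) (nonnegConstrs X)
      ∪ wpUpdSet (UTrans.upd t) (G (UTrans.tgt t)))

/-- Kleene iterates `G^i(q)` of the state-based guard equations. -/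
def iterG {Q X : Type} [DecidableEq X] (A : UTA Q X) : ℕ → Q → Set (Constr X)
  | 0 => fun q => ⋃ t ∈ A.trans, ⋃ (_ : UTrans.src t = q),
      ((UTrans.grd t : Set (Constr X)) ∪ wpUpdSet (UTrans.upd t) (nonnegConstrs X))
  | (i + 1) => fun q => iterG A i q ∪
      (⋃ t ∈ A.trans, ⋃ (_ : UTrans.src t = q),
        wpUpdSet (UTrans.upd t) (iterG A i (UTrans.tgt t)))

/-- `G^{i+1}(q)` is coloured red: a new diagonal constraint was added, or a new
non-diagonal constraint whose constant is strictly bigger than the constant of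
every non-diagonal constraint of the same kind on the same clock in `G^i(q)`. -/
def RedAt {Q X : Type} [DecidableEq X] (A : UTA Q X) : ℕ → Q → Prop
  | 0, _ => False
  | (i + 1), q =>
      (∃ φ : Constr X, φ ∈ iterG A (i + 1) q ∧ φ ∉ iterG A i q ∧ φ.isDiag) ∨
      (∃ (x : X) (o : Ineq) (c : ℕ),
        Constr.upper x o c ∈ iterG A (i + 1) q ∧ Constr.upper x o c ∉ iterG A i q ∧
        ∀ (o' : Ineq) (c' : ℕ), Constr.upper x o' c' ∈ iterG A i q → c' < c) ∨
      (∃ (x : X) (o : Ineq) (c : ℕ),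
        Constr.lower c o x ∈ iterG A (i + 1) q ∧ Constr.lower c o x ∉ iterG A i q ∧
        ∀ (o' : Ineq) (c' : ℕ), Constr.lower c' o' x ∈ iterG A i q → c' < c)

/-- `G^i(q)` is coloured green. -/
def GreenAt {Q X : Type} [DecidableEq X] (A : UTA Q X) (i : ℕ) (q : Q) : Prop :=
  ¬ RedAt A i q

/-- Absolute value of the constant of an atomic update. -/
def updBound {X : Type} : AtomicUp X → ℕ
  | .const c => c
  | .add _ d => d.natAbs

/-! ## The statement -/

theorem stmt9 {X : Type} [Fintype X] [DecidableEq X] (G : Finset (Constr X))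
    (Z Z' : Set (X → ℝ≥0)) :
    ¬ zoneRel (luglu G) Z Z' ↔
      ∃ S : Finset (Constr X), S ⊆ G ∧ (∀ φ ∈ S, φ.isDiag) ∧
        ¬ zoneRel (luSim (Lbound G) (Ubound G))
            {v ∈ Z | ∀ φ ∈ S, Constr.sat v φ} {v ∈ Z' | ∀ φ ∈ S, Constr.sat v φ} := by
  classical
  constructor
  · intro h
    by_contra hcon
    apply h
    intro v hv
    by_contra hno
    apply hcon
    refine ⟨G.filter (fun φ => φ.isDiag = true ∧ Constr.sat v φ), Finset.filter_subset _ _,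
      fun φ hφ => (Finset.mem_filter.mp hφ).2.1, ?_⟩
    intro hz
    obtain ⟨v', ⟨hv', hs⟩, hlu⟩ := hz v ⟨hv, fun φ hφ => (Finset.mem_filter.mp hφ).2.2⟩
    exact hno ⟨v', hv', hlu, fun φ hG hd hsat => hs φ (Finset.mem_filter.mpr ⟨hG, hd, hsat⟩)⟩
  · rintro ⟨S, hSG, hSd, hn⟩ h
    apply hn
    rintro v ⟨hv, hs⟩
    obtain ⟨v', hv', hlu, hd⟩ := h v hv
    exact ⟨v', ⟨hv', fun φ hφ => hd φ (hSG hφ) (hSd φ hφ) (hs φ hφ)⟩, hlu⟩
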